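/- arXiv:1703.04557 — 2 statements merged into one kernel-verified Lean document; each statement's English description precedes it below -/
import Mathlib

section
/- Let E be a locally compact separable metric space, q ∈ ℕ, g = (g_1,…,g_q) : E → [0,∞)^q locally bounded Borel, γ̄ > 0, (Ω̃,𝒢̃,ℙ̃) a probability space, and Λ̃ : E×(0,γ̄]×Ω̃ → [0,∞)^q measurable with max_i 𝔼̃[sup_{x∈E} sup_{γ∈(0,γ̄]} Λ̃_i(x,γ,·)] < ∞. Suppose each coordinate i satisfies either condition (I): ℙ̃-a.s., (i) for every compact K ⊆ E, lim_{γ→0} sup_{x∈K} Λ̃_i(x,γ,ω̃) = 0, and (ii) there is γ̲(ω̃) ∈ (0,γ̄] such that for every ε > 0 there is a compact K_ε with sup_{x∈E∖K_ε} sup_{γ∈(0,γ̲(ω̃)]} Λ̃_i(x,γ,ω̃) < ε; or condition (II): ℙ̃-a.s., lim_{γ→0} sup_{x∈E} Λ̃_i(x,γ,ω̃) g_i(x) = 0. Define Λ(x,γ) := Σ_{i=1}^q g_i(x) 𝔼̃[Λ̃_i(x,γ,·)]. Let (γ_n)_{n≥1} be a sequence in (0,γ̄] with γ_n → 0, (η_n)_{n≥1}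 nonnegative with H_n := η_1+⋯+η_n → ∞, and let (x̄_n)_{n≥0} be a sequence in E with max_i sup_{n≥1} (1/H_n) Σ_{k=1}^n η_k g_i(x̄_{k−1}) < ∞. Then lim_{n→∞} (1/H_n) Σ_{k=1}^n η_k Λ(x̄_{k−1},γ_k) = 0. -/
/-!
The factor `g` is unbounded, so dominated convergence does not apply to `g Λ̃` itself. The
quotient `g Λ̃ / (1 + g)` is at most `Λ̃`, which condition (I) makes small uniformly in `x`, and at
most `g Λ̃`, which condition (II) makes small; it is also dominated by the envelope of `Λ̃`, so its
expectation `b` along the sequence tends to `0`. In `η g 𝔼̃[Λ̃] = η (1 + g) b` the weights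
`η (1 + g)` have partial sums of the same order as `H`, and Cesàro's lemma concludes.
-/

open MeasureTheory Filter Set
open scoped Topology

theorem sum_Icc_one_eq_sum_range {M : Type*} [AddCommMonoid M] (f : ℕ → M) (n : ℕ) :
    ∑ k ∈ Finset.Icc 1 n, f k = ∑ k ∈ Finset.range n, f (k + 1) := by
  rw [← Finset.Ico_add_one_right_eq_Icc, Finset.sum_Ico_eq_sum_range, Nat.add_sub_cancel]
  simp only [add_comm]

section UniformConvergence

theorem tendsto_of_tendstoUniformly_const {ι κ X β : Type*} [UniformSpace β] {F : ι → X → β}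
    {y : β} {p : Filter ι} {l : Filter κ} {c : κ → ι} (hF : TendstoUniformly F (fun _ => y) p)
    (hc : Tendsto c l p) (x : κ → X) : Tendsto (fun k => F (c k) (x k)) l (𝓝 y) :=
  (tendsto_prod_top_iff.2 hF).comp (hc.prodMk tendsto_top)

variable {X : Type*} {T : Set ℝ} {F : ℝ → X → ℝ}

theorem tendstoUniformly_zero_nhdsWithin_of_le (hF : ∀ c ∈ T, ∀ x, 0 ≤ F c x)
    (h : ∀ ε : ℝ, 0 < ε → ∃ δ : ℝ, 0 < δ ∧ ∀ c ∈ T, c < δ → ∀ x, F c x ≤ ε) :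
    TendstoUniformly F (fun _ => 0) (𝓝[T] 0) := by
  rw [Metric.tendstoUniformly_iff]
  intro ε hε
  obtain ⟨δ, hδ, hδε⟩ := h (ε / 2) (half_pos hε)
  filter_upwards [self_mem_nhdsWithin, nhdsWithin_le_nhds (Iio_mem_nhds hδ)] with c hcT hcδ x
  rw [dist_comm, Real.dist_0_eq_abs, abs_of_nonneg (hF c hcT x)]
  exact (hδε c hcT hcδ x).trans_lt (half_lt_self hε)

theorem tendstoUniformly_zero_nhdsWithin_Ioc_of_isCompact_of_compl [TopologicalSpace X] {a : ℝ}
    (hF : ∀ c ∈ Ioc 0 a, ∀ x, 0 ≤ F c x)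
    (h_compact : ∀ K : Set X, IsCompact K → ∀ ε : ℝ, 0 < ε → ∃ δ : ℝ, 0 < δ ∧
      ∀ c ∈ Ioc 0 a, c < δ → ∀ x ∈ K, F c x ≤ ε)
    (h_compl : ∃ b : ℝ, 0 < b ∧ ∀ ε : ℝ, 0 < ε → ∃ K : Set X, IsCompact K ∧
      ∀ x ∉ K, ∀ c ∈ Ioc 0 b, F c x ≤ ε) :
    TendstoUniformly F (fun _ => 0) (𝓝[Ioc 0 a] 0) := by
  refine tendstoUniformly_zero_nhdsWithin_of_le hF fun ε hε => ?_
  obtain ⟨b, hb, hbK⟩ := h_compl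
  obtain ⟨K, hK, hKc⟩ := hbK ε hε
  obtain ⟨δ, hδ, hδK⟩ := h_compact K hK ε hε
  refine ⟨min δ b, lt_min hδ hb, fun c hc hcδb x => ?_⟩
  obtain ⟨hcδ, hcb⟩ := lt_min_iff.1 hcδb
  by_cases hx : x ∈ K
  exacts [hδK c hc hcδ x hx, hKc x hx c ⟨hc.1, hcb.le⟩]

end UniformConvergence

section WeightedAverages

variable {F : Type*} [NormedAddCommGroup F] [NormedSpace ℝ F]

theorem isBigO_of_inv_mul_le {α : Type*} {l : Filter α} {s t : α → ℝ} {M : ℝ}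
    (hs : ∀ n, 0 ≤ s n) (ht : ∀ᶠ n in l, 0 < t n) (hst : ∀ᶠ n in l, (t n)⁻¹ * s n ≤ M) :
    s =O[l] t := by
  refine Asymptotics.IsBigO.of_bound M ?_
  filter_upwards [ht, hst] with n htn hn
  rw [Real.norm_of_nonneg (hs n), Real.norm_of_nonneg htn.le, mul_comm]
  exact (inv_mul_le_iff₀ htn).1 hn

theorem tendsto_inv_smul_sum_range_smul {w H : ℕ → ℝ} {b : ℕ → F} (hw : ∀ k, 0 ≤ w k)
    (hw_sum : Tendsto (fun n => ∑ k ∈ Finset.range n, w k) atTop atTop)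
    (hwH : (fun n => ∑ k ∈ Finset.range n, w k) =O[atTop] H)
    (hb : Tendsto b atTop (𝓝 0)) :
    Tendsto (fun n => (H n)⁻¹ • ∑ k ∈ Finset.range n, w k • b k) atTop (𝓝 0) := by
  have hwb : (fun k => w k • b k) =o[atTop] w := by
    simpa only [smul_eq_mul, mul_one] using (Asymptotics.isBigO_refl w atTop).smul_isLittleO
      ((Asymptotics.isLittleO_one_iff ℝ).2 hb)
  exact ((hwb.sum_range hw hw_sum).trans_isBigO hwH).tendsto_inv_smul_nhds_zero

theorem tendsto_inv_smul_sum_range_mul_one_add_smul {η v : ℕ → ℝ} {b : ℕ → F}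
    (hη : ∀ k, 0 ≤ η k) (hη_sum : Tendsto (fun n => ∑ k ∈ Finset.range n, η k) atTop atTop)
    (hv : ∀ k, 0 ≤ v k)
    (hηv : (fun n => ∑ k ∈ Finset.range n, η k * v k) =O[atTop]
      fun n => ∑ k ∈ Finset.range n, η k)
    (hb : Tendsto b atTop (𝓝 0)) :
    Tendsto (fun n => (∑ k ∈ Finset.range n, η k)⁻¹ •
      ∑ k ∈ Finset.range n, (η k * (1 + v k)) • b k) atTop (𝓝 0) := by
  have hv' : ∀ k, 1 ≤ 1 + v k := fun k => le_add_of_nonneg_right (hv k)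
  refine tendsto_inv_smul_sum_range_smul
    (fun k => mul_nonneg (hη k) (zero_le_one.trans (hv' k))) ?_ ?_ hb
  · exact tendsto_atTop_mono
      (fun n => Finset.sum_le_sum fun k _ => le_mul_of_one_le_right (hη k) (hv' k)) hη_sum
  · simp only [mul_add, mul_one, Finset.sum_add_distrib]
    exact (Asymptotics.isBigO_refl _ _).add hηv

theorem norm_div_one_add_smul_le_norm_smul {t : ℝ} (ht : 0 ≤ t) (x : F) :
    ‖(t / (1 + t)) • x‖ ≤ ‖t • x‖ := by
  rw [norm_smul, norm_smul, Real.norm_of_nonneg (by positivity), Real.norm_of_nonneg ht]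
  gcongr
  exact div_le_self ht (le_add_of_nonneg_right ht)

theorem norm_div_one_add_smul_le {t : ℝ} (ht : 0 ≤ t) (x : F) :
    ‖(t / (1 + t)) • x‖ ≤ ‖x‖ := by
  rw [norm_smul, Real.norm_of_nonneg (by positivity)]
  exact mul_le_of_le_one_left (norm_nonneg x)
    (div_le_one_of_le₀ (le_add_of_nonneg_left zero_le_one) (by positivity))

theorem tendsto_div_one_add_smul {ι : Type*} {l : Filter ι} {v : ι → ℝ} {f : ι → F}
    (hv : ∀ k, 0 ≤ v k)
    (hf : Tendsto f l (𝓝 0) ∨ Tendsto (fun k => v k • f k) l (𝓝 0)) :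
    Tendsto (fun k => (v k / (1 + v k)) • f k) l (𝓝 0) := by
  rcases hf with hf | hvf
  · exact squeeze_zero_norm (fun k => norm_div_one_add_smul_le (hv k) _)
      (tendsto_zero_iff_norm_tendsto_zero.1 hf)
  · exact squeeze_zero_norm (fun k => norm_div_one_add_smul_le_norm_smul (hv k) _)
      (tendsto_zero_iff_norm_tendsto_zero.1 hvf)

variable {Ω : Type*} [MeasurableSpace Ω] {μ : Measure Ω}

theorem tendsto_integral_div_one_add_smul {ι : Type*} {l : Filter ι} [l.IsCountablyGenerated]
    {v : ι → ℝ} {f : ι → Ω → F} {S : Ω → ℝ} (hv : ∀ k, 0 ≤ v k)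
    (hf_meas : ∀ k, AEStronglyMeasurable (f k) μ) (hS : Integrable S μ)
    (hfS : ∀ k, ∀ᵐ ω ∂μ, ‖f k ω‖ ≤ S ω)
    (hf : ∀ᵐ ω ∂μ, Tendsto (fun k => f k ω) l (𝓝 0) ∨
      Tendsto (fun k => v k • f k ω) l (𝓝 0)) :
    Tendsto (fun k => ∫ ω, (v k / (1 + v k)) • f k ω ∂μ) l (𝓝 0) := by
  rw [← integral_zero Ω F (μ := μ)]
  refine tendsto_integral_filter_of_dominated_convergence S
    (.of_forall fun k => (hf_meas k).const_smul _) (.of_forall fun k => ?_) hS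
    (hf.mono fun ω hω => tendsto_div_one_add_smul hv hω)
  filter_upwards [hfS k] with ω hω
  exact (norm_div_one_add_smul_le (hv k) _).trans hω

theorem tendsto_inv_smul_sum_range_mul_smul_integral {η v : ℕ → ℝ} {f : ℕ → Ω → F} {S : Ω → ℝ}
    (hη : ∀ k, 0 ≤ η k) (hη_sum : Tendsto (fun n => ∑ k ∈ Finset.range n, η k) atTop atTop)
    (hv : ∀ k, 0 ≤ v k)
    (hηv : (fun n => ∑ k ∈ Finset.range n, η k * v k) =O[atTop]
      fun n => ∑ k ∈ Finset.range n, η k)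
    (hf_meas : ∀ k, AEStronglyMeasurable (f k) μ) (hS : Integrable S μ)
    (hfS : ∀ k, ∀ᵐ ω ∂μ, ‖f k ω‖ ≤ S ω)
    (hf : ∀ᵐ ω ∂μ, Tendsto (fun k => f k ω) atTop (𝓝 0) ∨
      Tendsto (fun k => v k • f k ω) atTop (𝓝 0)) :
    Tendsto (fun n => (∑ k ∈ Finset.range n, η k)⁻¹ •
      ∑ k ∈ Finset.range n, (η k * v k) • ∫ ω, f k ω ∂μ) atTop (𝓝 0) := by
  have h_split : ∀ k, (η k * v k) • ∫ ω, f k ω ∂μ =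
      (η k * (1 + v k)) • ∫ ω, (v k / (1 + v k)) • f k ω ∂μ := fun k => by
    have : 1 + v k ≠ 0 := (add_pos_of_pos_of_nonneg one_pos (hv k)).ne'
    rw [integral_smul, smul_smul, mul_assoc, mul_div_cancel₀ _ this]
  simp only [h_split]
  exact tendsto_inv_smul_sum_range_mul_one_add_smul hη hη_sum hv hηv
    (tendsto_integral_div_one_add_smul hv hf_meas hS hfS hf)

theorem tendsto_inv_smul_sum_range_mul_smul_integral_of_tendstoUniformly {C X : Type*}
    {f : C → X → Ω → F} {g : X → ℝ} {S : Ω → ℝ} {p : Filter C} {η : ℕ → ℝ} {c : ℕ → C} {x : ℕ → X}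
    (hη : ∀ k, 0 ≤ η k) (hη_sum : Tendsto (fun n => ∑ k ∈ Finset.range n, η k) atTop atTop)
    (hg : ∀ y, 0 ≤ g y)
    {M : ℝ} (hM : ∀ᶠ n in atTop,
      (∑ k ∈ Finset.range n, η k)⁻¹ * ∑ k ∈ Finset.range n, η k * g (x k) ≤ M)
    (hc : Tendsto c atTop p)
    (hf_meas : ∀ k, AEStronglyMeasurable (f (c k) (x k)) μ) (hS : Integrable S μ)
    (hfS : ∀ k, ∀ᵐ ω ∂μ, ‖f (c k) (x k) ω‖ ≤ S ω)
    (hf : ∀ᵐ ω ∂μ, TendstoUniformly (fun c y => f c y ω) (fun _ => 0) p ∨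
      TendstoUniformly (fun c y => g y • f c y ω) (fun _ => 0) p) :
    Tendsto (fun n => (∑ k ∈ Finset.range n, η k)⁻¹ •
      ∑ k ∈ Finset.range n, (η k * g (x k)) • ∫ ω, f (c k) (x k) ω ∂μ) atTop (𝓝 0) := by
  have hηg : (fun n => ∑ k ∈ Finset.range n, η k * g (x k)) =O[atTop]
      fun n => ∑ k ∈ Finset.range n, η k :=
    isBigO_of_inv_mul_le (fun n => Finset.sum_nonneg fun k _ => mul_nonneg (hη k) (hg _))
      (hη_sum.eventually_gt_atTop 0) hM
  refine tendsto_inv_smul_sum_range_mul_smul_integral hη hη_sum (fun k => hg _) hηg hf_meas hS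
    hfS ?_
  filter_upwards [hf] with ω hω
  exact hω.imp (tendsto_of_tendstoUniformly_const · hc x)
    (tendsto_of_tendstoUniformly_const · hc x)

end WeightedAverages

theorem stmt_4_general {E ι Ω : Type*} [TopologicalSpace E] [Fintype ι]
    (g : E → ι → ℝ) (hg : ∀ x i, 0 ≤ g x i) {a : ℝ}
    [MeasurableSpace Ω] {μ : Measure Ω} {Λ : E → ℝ → Ω → ι → ℝ}
    (hΛ_meas : ∀ x, ∀ c ∈ Ioc 0 a, ∀ i, AEStronglyMeasurable (fun ω => Λ x c ω i) μ)
    (hΛ : ∀ x, ∀ c ∈ Ioc 0 a, ∀ ω i, 0 ≤ Λ x c ω i)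
    (S : Ω → ℝ) (hS : Integrable S μ)
    (hΛS : ∀ᵐ ω ∂μ, ∀ i x, ∀ c ∈ Ioc 0 a, Λ x c ω i ≤ S ω)
    (hΛ_lim : ∀ i,
      (∀ᵐ ω ∂μ,
        (∀ K : Set E, IsCompact K → ∀ ε : ℝ, 0 < ε → ∃ δ : ℝ, 0 < δ ∧
          ∀ c ∈ Ioc 0 a, c < δ → ∀ x ∈ K, Λ x c ω i ≤ ε) ∧
        ∃ b ∈ Ioc 0 a, ∀ ε : ℝ, 0 < ε → ∃ K : Set E, IsCompact K ∧
          ∀ x ∉ K, ∀ c ∈ Ioc 0 b, Λ x c ω i ≤ ε) ∨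
      ∀ᵐ ω ∂μ, ∀ ε : ℝ, 0 < ε → ∃ δ : ℝ, 0 < δ ∧
        ∀ c ∈ Ioc 0 a, c < δ → ∀ x, Λ x c ω i * g x i ≤ ε)
    (γ η H : ℕ → ℝ) (hγ : ∀ n, 1 ≤ n → γ n ∈ Ioc 0 a) (hγ_lim : Tendsto γ atTop (𝓝 0))
    (hη : ∀ n, 1 ≤ n → 0 ≤ η n) (hH : ∀ n, H n = ∑ k ∈ Finset.Icc 1 n, η k)
    (hH_lim : Tendsto H atTop atTop) (x : ℕ → E)
    (hx : ∀ i, ∃ M : ℝ, ∀ n, 1 ≤ n →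
      (H n)⁻¹ * ∑ k ∈ Finset.Icc 1 n, η k * g (x (k - 1)) i ≤ M) :
    Tendsto (fun n => (H n)⁻¹ * ∑ k ∈ Finset.Icc 1 n, η k *
      ∑ i, g (x (k - 1)) i * ∫ ω, Λ (x (k - 1)) (γ k) ω i ∂μ) atTop (𝓝 0) := by
  obtain rfl : H = fun n => ∑ k ∈ Finset.Icc 1 n, η k := funext hH
  simp only [sum_Icc_one_eq_sum_range, Nat.add_sub_cancel] at hH_lim hx ⊢
  have hγ' : ∀ k, γ (k + 1) ∈ Ioc 0 a := fun k => hγ _ k.succ_pos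
  have hη' : ∀ k, 0 ≤ η (k + 1) := fun k => hη _ k.succ_pos
  have hγ_lim' : Tendsto (fun k => γ (k + 1)) atTop (𝓝[Ioc 0 a] 0) :=
    tendsto_nhdsWithin_iff.2 ⟨hγ_lim.comp (tendsto_add_atTop_nat 1), .of_forall hγ'⟩
  have h_unif : ∀ i, ∀ᵐ ω ∂μ,
      TendstoUniformly (fun c y => Λ y c ω i) (fun _ => 0) (𝓝[Ioc 0 a] 0) ∨
      TendstoUniformly (fun c y => g y i • Λ y c ω i) (fun _ => 0) (𝓝[Ioc 0 a] 0) := by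
    intro i
    refine (hΛ_lim i).elim (fun hI => hI.mono fun ω hω => .inl ?_)
      (fun hII => hII.mono fun ω hω => .inr ?_)
    · obtain ⟨h_compact, b, hb, h_compl⟩ := hω
      exact tendstoUniformly_zero_nhdsWithin_Ioc_of_isCompact_of_compl
        (fun c hc y => hΛ y c hc ω i) h_compact ⟨b, hb.1, h_compl⟩
    · simp only [smul_eq_mul, mul_comm (g _ i)]
      exact tendstoUniformly_zero_nhdsWithin_of_le
        (fun c hc y => mul_nonneg (hΛ y c hc ω i) (hg y i)) hω
  have h_coord : ∀ i, Tendsto (fun n => (∑ k ∈ Finset.range n, η (k + 1))⁻¹ •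
      ∑ k ∈ Finset.range n, (η (k + 1) * g (x k) i) • ∫ ω, Λ (x k) (γ (k + 1)) ω i ∂μ)
      atTop (𝓝 0) := by
    intro i
    obtain ⟨M, hM⟩ := hx i
    refine tendsto_inv_smul_sum_range_mul_smul_integral_of_tendstoUniformly
      (f := fun c y ω => Λ y c ω i) (g := (g · i)) (x := x) hη' hH_lim (hg · i)
      ((eventually_ge_atTop 1).mono hM) hγ_lim'
      (fun k => hΛ_meas _ _ (hγ' k) i) hS (fun k => ?_) (h_unif i)
    filter_upwards [hΛS] with ω hω
    exact (Real.norm_of_nonneg (hΛ _ _ (hγ' k) ω i)).trans_le (hω i _ _ (hγ' k))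
  have h_sum := tendsto_finsetSum Finset.univ fun i _ => h_coord i
  simp only [Finset.sum_const_zero, smul_eq_mul, ← Finset.mul_sum] at h_sum
  simpa only [Finset.mul_sum, mul_assoc, Finset.sum_comm (s := Finset.univ)] using h_sum

/-- the deterministic key lemma for the identification of limits.  With
`Λ(x,γ) := Σ_{i=1}^q g_i(x) 𝔼̃[Λ̃_i(x,γ,·)]`, where each coordinate of `Λ̃` satisfies
either condition (I) or condition (II), and a sequence `(x̄_n)` along which the weighted
averages of each `g_i` stay bounded, one has
`(1/H_n) Σ_{k=1}^n η_k Λ(x̄_{k−1},γ_k) → 0`. -/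
theorem stmt_4
    {E : Type*} [MeasurableSpace E] [MetricSpace E] [TopologicalSpace.SeparableSpace E]
    [LocallyCompactSpace E] [BorelSpace E]
    (q : ℕ)
    (g : E → Fin q → ℝ) (hgmeas : ∀ i, Measurable (fun x => g x i))
    (hgpos : ∀ x i, 0 ≤ g x i)
    (hgloc : ∀ K : Set E, IsCompact K → ∃ C : ℝ, ∀ x ∈ K, ∀ i, g x i ≤ C)
    (γbar : ℝ) (hγbar : 0 < γbar)
    {Ωt : Type*} [MeasurableSpace Ωt] (Pt : Measure Ωt) [IsProbabilityMeasure Pt]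
    (Λt : E → ℝ → Ωt → Fin q → ℝ)
    (hΛmeas : ∀ i, Measurable (fun p : E × ℝ × Ωt => Λt p.1 p.2.1 p.2.2 i))
    (hΛpos : ∀ x c ωt i, 0 ≤ Λt x c ωt i)
    -- 𝔼̃[sup_x sup_γ Λ̃_i] < ∞, via an integrable envelope
    (S : Ωt → ℝ) (hSint : Integrable S Pt)
    (hSenv : ∀ᵐ ωt ∂Pt, ∀ (i : Fin q) (x : E), ∀ c ∈ Set.Ioc (0 : ℝ) γbar, Λt x c ωt i ≤ S ωt)
    -- each coordinate satisfies condition (I) or condition (II)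
    (hIorII : ∀ i : Fin q,
      (∀ᵐ ωt ∂Pt,
        (∀ K : Set E, IsCompact K → ∀ ε : ℝ, 0 < ε → ∃ δ : ℝ, 0 < δ ∧
          ∀ c ∈ Set.Ioc (0 : ℝ) γbar, c < δ → ∀ x ∈ K, Λt x c ωt i ≤ ε)
        ∧ (∃ γlow : ℝ, γlow ∈ Set.Ioc (0 : ℝ) γbar ∧ ∀ ε : ℝ, 0 < ε →
            ∃ K : Set E, IsCompact K ∧ ∀ x ∉ K,
              ∀ c ∈ Set.Ioc (0 : ℝ) γlow, Λt x c ωt i ≤ ε))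
      ∨ (∀ᵐ ωt ∂Pt, ∀ ε : ℝ, 0 < ε → ∃ δ : ℝ, 0 < δ ∧
          ∀ c ∈ Set.Ioc (0 : ℝ) γbar, c < δ → ∀ x : E, Λt x c ωt i * g x i ≤ ε))
    -- the sequences
    (γ η H : ℕ → ℝ)
    (hγ : ∀ n, 1 ≤ n → γ n ∈ Set.Ioc (0 : ℝ) γbar)
    (hγlim : Tendsto γ atTop (nhds 0))
    (hη : ∀ n, 1 ≤ n → 0 ≤ η n)
    (hH : ∀ n, H n = ∑ k ∈ Finset.Icc 1 n, η k)
    (hHlim : Tendsto H atTop atTop)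
    (xb : ℕ → E)
    (hxb : ∀ i : Fin q, ∃ M : ℝ, ∀ n, 1 ≤ n →
      (H n)⁻¹ * ∑ k ∈ Finset.Icc 1 n, η k * g (xb (k - 1)) i ≤ M) :
    Tendsto (fun n => (H n)⁻¹ * ∑ k ∈ Finset.Icc 1 n, η k *
        ∑ i, g (xb (k - 1)) i * ∫ ωt, Λt (xb (k - 1)) (γ k) ωt i ∂Pt)
      atTop (nhds 0) :=
  stmt_4_general (Λ := Λt) g hgpos
    (fun _ _ _ i => ((hΛmeas i).comp
      (measurable_prodMk_left.comp measurable_prodMk_left)).aestronglyMeasurable)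
    (fun x c _ ω i => hΛpos x c ω i) S hSint hSenv hIorII γ η H hγ hγlim hη hH hHlim xb hxb
end

section
/- Under the abstract setting, let v_* > 0, V : E → [v_*,∞) Borel, ψ : [v_*,∞) → (0,∞) Borel and locally bounded, α > 0 and β ∈ ℝ. Assume the strongly mean-reverting recursive control holds: there is n₀ ∈ ℕ such that for every n ≥ n₀ and every x ∈ E, Ã_{γ_n}(ψ∘V)(x) ≤ (ψ(V(x))/V(x))(β − α V(x)). Assume also that 𝔼[ψ(V(X_n))] < ∞ for every n. Then sup_{n≥0} 𝔼[ψ(V(X_n))] < +∞. -/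
open MeasureTheory ProbabilityTheory Filter Set

/-!
Write `u n = 𝔼[ψ (V (X n))]`. Half of the mean-reverting term `-α V` absorbs `β` as soon as
`V ≥ 2 β / α`, and below that level `ψ ∘ V` is bounded, so the drift of `ψ ∘ V` is at most
`D - (α / 2) (ψ ∘ V)` for some constant `D`. Taking expectations,
`u (n + 1) ≤ (1 - (α / 2) γ (n + 1)) * u n + γ (n + 1) * D`. When the factor of `u n` is
nonnegative this is a convex combination of `u n` and `2 D / α`; when it is negative,
`u (n + 1) ≤ γ (n + 1) * D` because `u n ≥ 0`. As the steps are bounded, so is `u`.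
-/

section RealSequences

variable {δ a abar D u M : ℝ}

lemma one_sub_mul_add_mul_le (hu : 0 ≤ u) (huM : u ≤ M) (ha : a ∈ Icc 0 abar)
    (hδM : D ≤ δ * M) (haM : abar * |D| ≤ M) : (1 - δ * a) * u + a * D ≤ M := by
  rcases le_total 0 (1 - δ * a) with hcontract | hovershoot
  · calc (1 - δ * a) * u + a * D ≤ (1 - δ * a) * M + a * (δ * M) :=
          add_le_add (mul_le_mul_of_nonneg_left huM hcontract)
            (mul_le_mul_of_nonneg_left hδM ha.1)
      _ = M := by ring
  · calc (1 - δ * a) * u + a * D ≤ 0 + a * |D| :=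
          add_le_add (mul_nonpos_of_nonpos_of_nonneg hovershoot hu)
            (mul_le_mul_of_nonneg_left (le_abs_self D) ha.1)
      _ ≤ abar * |D| := by
          rw [zero_add]
          exact mul_le_mul_of_nonneg_right ha.2 (abs_nonneg D)
      _ ≤ M := haM

lemma bddAbove_range_of_le_one_sub_mul_add {u a : ℕ → ℝ} {N : ℕ} (hδ : 0 < δ)
    (hu : ∀ n, 0 ≤ u n) (ha : ∀ n, a n ∈ Icc 0 abar)
    (hrec : ∀ n, N ≤ n → u (n + 1) ≤ (1 - δ * a n) * u n + a n * D) :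
    BddAbove (range u) := by
  obtain ⟨M, hM⟩ : ∃ M, M = max (u N) (max (D / δ) (abar * |D|)) := ⟨_, rfl⟩
  have hNM : u N ≤ M := hM ▸ le_max_left _ _
  have hδM : D ≤ δ * M := (div_le_iff₀' hδ).1 (hM ▸ le_max_of_le_right (le_max_left _ _))
  have haM : abar * |D| ≤ M := hM ▸ le_max_of_le_right (le_max_right _ _)
  have htail : ∀ n, N ≤ n → u n ≤ M := fun n hn ↦ by
    induction n, hn using Nat.le_induction with
    | base => exact hNM
    | succ n hn ih =>
      exact (hrec n hn).trans (one_sub_mul_add_mul_le (hu n) ih (ha n) hδM haM)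
  exact (isBoundedUnder_of_eventually_le (eventually_atTop.2 ⟨N, htail⟩)).bddAbove_range

end RealSequences

lemma exists_meanReverting_le_sub_mul {ψ : ℝ → ℝ} {v α β δ : ℝ} (hv : 0 < v) (hδ : δ < α)
    (hψ : ∀ y, v ≤ y → 0 ≤ ψ y) (hψloc : ∀ M, ∃ C, ∀ y ∈ Icc v M, ψ y ≤ C) :
    ∃ D, ∀ y, v ≤ y → ψ y / y * (β - α * y) ≤ D - δ * ψ y := by
  obtain ⟨C, hC⟩ := hψloc (β / (α - δ))
  refine ⟨|C| / v * |β|, fun y hy ↦ ?_⟩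
  have hy0 : 0 < y := hv.trans_le hy
  have hψy : 0 ≤ ψ y / y := div_nonneg (hψ y hy) hy0.le
  have hsplit : ψ y / y * (β - α * y) = ψ y / y * (β - (α - δ) * y) - δ * ψ y := by
    field_simp
    ring
  suffices ψ y / y * (β - (α - δ) * y) ≤ |C| / v * |β| by linarith
  rcases le_total (β / (α - δ)) y with hlarge | hsmall
  · have hreverts : β - (α - δ) * y ≤ 0 :=
      sub_nonpos.2 ((div_le_iff₀' (sub_pos.2 hδ)).1 hlarge)
    exact (mul_nonpos_of_nonneg_of_nonpos hψy hreverts).trans (by positivity)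
  · have hψC : ψ y / y ≤ |C| / v :=
      div_le_div₀ (abs_nonneg C) ((hC y ⟨hy, hsmall⟩).trans (le_abs_self C)) hv hy
    have hβ : β - (α - δ) * y ≤ |β| := by
      linarith [mul_pos (sub_pos.2 hδ) hy0, le_abs_self β]
    exact (mul_le_mul_of_nonneg_left hβ hψy).trans
      (mul_le_mul_of_nonneg_right hψC (abs_nonneg β))

section CondExp

variable {Ω : Type*} {m m0 : MeasurableSpace Ω} {μ : Measure Ω}

lemma integral_le_mul_integral_add_of_condExp_le [IsFiniteMeasure μ] {f g : Ω → ℝ} {a b : ℝ}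
    (hm : m ≤ m0) (hf : Integrable f μ) (hgf : μ[g | m] ≤ᵐ[μ] fun ω ↦ a * f ω + b) :
    ∫ ω, g ω ∂μ ≤ a * ∫ ω, f ω ∂μ + b * μ.real univ := by
  have haf : Integrable (fun ω ↦ a * f ω) μ := hf.const_mul a
  calc ∫ ω, g ω ∂μ = ∫ ω, (μ[g | m]) ω ∂μ := (integral_condExp hm).symm
    _ ≤ ∫ ω, (a * f ω + b) ∂μ :=
        integral_mono_ae integrable_condExp (haf.add (integrable_const b)) hgf
    _ = a * ∫ ω, f ω ∂μ + b * μ.real univ := by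
        rw [integral_add haf (integrable_const b), integral_const_mul, integral_const,
          smul_eq_mul, mul_comm b]

/-- The pseudo-generator `Ã_γ f = (Q_γ f - f) / γ` of a step of length `γ` with transition
kernel `κ = Q_γ`. -/
noncomputable def pseudoGenerator {E : Type*} [MeasurableSpace E] (κ : Kernel E E) (γ : ℝ)
    (f : E → ℝ) (x : E) : ℝ :=
  ((∫ y, f y ∂κ x) - f x) / γ

lemma condExp_le_add_mul_of_pseudoGenerator_le {E : Type*} [MeasurableSpace E]
    {κ : Kernel E E} {γ : ℝ} {f g : E → ℝ} {X : Ω → E} {Z : Ω → ℝ} (hγ : 0 < γ)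
    (hZ : μ[Z | m] =ᵐ[μ] fun ω ↦ ∫ y, f y ∂κ (X ω))
    (hfg : ∀ x, pseudoGenerator κ γ f x ≤ g x) :
    μ[Z | m] ≤ᵐ[μ] fun ω ↦ f (X ω) + γ * g (X ω) := by
  filter_upwards [hZ] with ω hω
  rw [hω, ← sub_le_iff_le_add', ← div_le_iff₀' hγ]
  exact hfg (X ω)

end CondExp

/-- The process `W n` takes the place of `V (X n)`. -/
theorem stmt_5_general {Ω : Type*} {m0 : MeasurableSpace Ω} {P : Measure Ω} [IsFiniteMeasure P]
    (ℱ : Filtration ℕ m0) {γbar : ℝ} {γ : ℕ → ℝ} (hγ : ∀ n, 1 ≤ n → γ n ∈ Icc 0 γbar)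
    {v α β : ℝ} (hv : 0 < v) (hα : 0 < α)
    {ψ : ℝ → ℝ} (hψ : ∀ y, v ≤ y → 0 ≤ ψ y) (hψloc : ∀ M, ∃ C, ∀ y ∈ Icc v M, ψ y ≤ C)
    {W : ℕ → Ω → ℝ} (hW : ∀ n, ∀ᵐ ω ∂P, v ≤ W n ω)
    (hint : ∀ n, Integrable (fun ω ↦ ψ (W n ω)) P)
    {n₀ : ℕ} (hdrift : ∀ n, n₀ ≤ n + 1 → P[fun ω ↦ ψ (W (n + 1) ω) | ℱ n] ≤ᵐ[P] fun ω ↦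
      ψ (W n ω) + γ (n + 1) * (ψ (W n ω) / W n ω * (β - α * W n ω))) :
    BddAbove (range fun n ↦ ∫ ω, ψ (W n ω) ∂P) := by
  obtain ⟨D, hD⟩ := exists_meanReverting_le_sub_mul (β := β) hv (half_lt_self hα) hψ hψloc
  refine bddAbove_range_of_le_one_sub_mul_add (a := fun n ↦ γ (n + 1)) (N := n₀)
    (D := D * P.real univ) (half_pos hα)
    (fun n ↦ integral_nonneg_of_ae ((hW n).mono fun ω hω ↦ hψ _ hω))
    (fun n ↦ hγ (n + 1) n.succ_pos) fun n hn ↦ ?_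
  rw [← mul_assoc]
  refine integral_le_mul_integral_add_of_condExp_le (ℱ.le n) (hint n) ?_
  filter_upwards [hdrift n (Nat.le_succ_of_le hn), hW n] with ω hω hWω
  linarith [mul_le_mul_of_nonneg_left (hD _ hWω) (hγ (n + 1) n.succ_pos).1]

/-- under the abstract setting, the strongly mean-reverting recursive control
`Ã_{γ_n}(ψ∘V)(x) ≤ (ψ(V(x))/V(x))(β − α V(x))` (for `n ≥ n₀`) together with
`𝔼[ψ(V(X_n))] < ∞` for every `n` implies `sup_n 𝔼[ψ(V(X_n))] < ∞`. -/
theorem stmt_5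
    {E : Type*} [MeasurableSpace E] [MetricSpace E] [TopologicalSpace.SeparableSpace E]
    [LocallyCompactSpace E] [BorelSpace E]
    {Ω : Type*} {m0 : MeasurableSpace Ω} {P : Measure Ω} [IsProbabilityMeasure P]
    (ℱ : Filtration ℕ m0)
    (γbar : ℝ) (hγbar : 0 < γbar) (γ : ℕ → ℝ)
    (hγ : ∀ n, 1 ≤ n → γ n ∈ Set.Ioc (0 : ℝ) γbar)
    (hγlim : Tendsto γ atTop (nhds 0))
    (hΓlim : Tendsto (fun n => ∑ k ∈ Finset.Icc 1 n, γ k) atTop atTop)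
    (Q : ℝ → Kernel E E) [∀ c, IsMarkovKernel (Q c)]
    (X : ℕ → Ω → E)
    (hXad : ∀ n, Measurable[ℱ n] (X n))
    (hMarkov : ∀ (n : ℕ) (f : E → ℝ), Measurable f →
      Integrable (fun ω => f (X (n + 1) ω)) P →
      P[(fun ω => f (X (n + 1) ω)) | ℱ n]
        =ᵐ[P] fun ω => ∫ y, f y ∂(Q (γ (n + 1)) (X n ω)))
    -- data of the statement
    (vstar α β : ℝ) (hv : 0 < vstar) (hα : 0 < α)
    (V : E → ℝ) (hVmeas : Measurable V) (hVlb : ∀ x, vstar ≤ V x)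
    (ψ : ℝ → ℝ) (hψmeas : Measurable ψ) (hψpos : ∀ y, vstar ≤ y → 0 < ψ y)
    (hψloc : ∀ M, ∃ Cloc, ∀ y ∈ Set.Icc vstar M, ψ y ≤ Cloc)
    (hQint : ∀ c ∈ Set.Ioc (0 : ℝ) γbar, ∀ x : E,
      Integrable (fun y => ψ (V y)) (Q c x))
    -- strongly mean-reverting recursive control
    (n₀ : ℕ) (hRC : ∀ n, n₀ ≤ n → 1 ≤ n → ∀ x : E,
      ((∫ y, ψ (V y) ∂(Q (γ n) x)) - ψ (V x)) / γ n
        ≤ (ψ (V x) / V x) * (β - α * V x))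
    (hint : ∀ n, Integrable (fun ω => ψ (V (X n ω))) P) :
    ∃ M : ℝ, ∀ n, ∫ ω, ψ (V (X n ω)) ∂P ≤ M := by
  have hbdd := stmt_5_general ℱ (fun n hn ↦ Ioc_subset_Icc_self (hγ n hn)) hv hα
    (fun y hy ↦ (hψpos y hy).le) hψloc (fun n ↦ ae_of_all P fun ω ↦ hVlb (X n ω)) hint
    fun n hn ↦ condExp_le_add_mul_of_pseudoGenerator_le (hγ (n + 1) n.succ_pos).1
      (hMarkov n _ (hψmeas.comp hVmeas) (hint (n + 1))) (hRC (n + 1) hn n.succ_pos)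
  simpa only [bddAbove_def, forall_mem_range] using hbdd
end
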